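/- Fix t > 0, x₀ ∈ ℝ, μ ∈ ℝ, σ > 0 with x₀ ≠ μ. For each θ > 0 let γ_θ be the Gaussian probability measure on ℝ with mean m_t = x₀·e^{−θt} + μ·(1 − e^{−θt}) and variance σ_t² = (σ²/(2θ))·(1 − e^{−2θt}). Define T**_n : ℝⁿ → ℝ by T**_n(z_1,…,z_n) = −(1/t)·ln( ((Σ_{k=1}^n z_k)/n − μ) / (x₀ − μ) ), and define T_{**}^{(0)} : ℝ^ℕ → ℝ by T_{**}^{(0)}((z_k)_{k∈ℕ}) = liminf_{n→∞} T**_n(z_1,…,z_n). Then for every θ > 0, γ_θ^ℕ({(z_k)_{k∈ℕ} ∈ ℝ^ℕ : T_{**}^{(0)}((z_k)) = θ}) = 1; that is, T_{**}^{(0)} is an infinite-sample consistent estimator of θ for the family (γ_θ^ℕ)_{θ>0}. -/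

import Mathlib

/-!
By the strong law of large numbers applied to the coordinate projections, which are i.i.d. under
the product measure, the sample mean converges almost surely to the Gaussian mean `m_t`. Since
`(m_t - μ) / (x₀ - μ) = exp (-θ t)` is nonzero, the logarithm is continuous there, so the estimator
sequence converges almost surely to `-(1 / t) * log (exp (-θ t)) = θ`, and its `liminf` is this limit.
-/

open MeasureTheory ProbabilityTheory Filter Real

/-- `P` is the countable product measure `ν^ℕ` on `ℕ → ℝ` of the Borel probability
measure `ν` on `ℝ`: it is a probability measure whose finite-dimensional cylinder
marginals are products of `ν`. -/
def IsCountableProductOf (P : Measure (ℕ → ℝ)) (ν : Measure ℝ) : Prop :=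
  IsProbabilityMeasure P ∧
    ∀ (s : Finset ℕ) (B : ℕ → Set ℝ), (∀ i ∈ s, MeasurableSet (B i)) →
      P {z : ℕ → ℝ | ∀ i ∈ s, z i ∈ B i} = ∏ i ∈ s, ν (B i)


/-- A measure with product cylinder marginals is the infinite product measure of Mathlib. -/
lemma IsCountableProductOf.eq_infinitePi {P : Measure (ℕ → ℝ)} {ν : Measure ℝ}
    [IsProbabilityMeasure ν] (h : IsCountableProductOf P ν) :
    P = Measure.infinitePi (fun _ : ℕ => ν) := by
  refine Measure.eq_infinitePi _ fun s B hB => ?_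
  exact h.2 s B fun i _ => hB i

/-- The strong law of large numbers for the coordinate projections of a product measure. -/
lemma ae_tendsto_mean_infinitePi (ν : Measure ℝ) [IsProbabilityMeasure ν]
    (hν : Integrable id ν) :
    ∀ᵐ z ∂(Measure.infinitePi (fun _ : ℕ => ν)),
      Tendsto (fun n : ℕ => (∑ k ∈ Finset.range n, z k) / (n : ℝ)) atTop (nhds (∫ x : ℝ, x ∂ν)) := by
  have hmp (i : ℕ) : MeasurePreserving (Function.eval i)
      (Measure.infinitePi (fun _ : ℕ => ν)) ν :=
    measurePreserving_eval_infinitePi (fun _ : ℕ => ν) i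
  have hind : iIndepFun (fun (i : ℕ) (z : ℕ → ℝ) => z i)
      (Measure.infinitePi (fun _ : ℕ => ν)) :=
    iIndepFun_infinitePi (P := fun _ : ℕ => ν) (X := fun _ x => x) fun _ => measurable_id
  have hmean : ∫ z, z 0 ∂(Measure.infinitePi (fun _ : ℕ => ν)) = ∫ x, x ∂ν := by
    have hmap := integral_map (hmp 0).aemeasurable (f := fun x : ℝ => x)
      measurable_id.aestronglyMeasurable
    rw [(hmp 0).map_eq] at hmap
    exact hmap.symm
  rw [← hmean]
  -- With the measure a variable, unification does not unfold the construction of the infinite product.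
  generalize Measure.infinitePi (fun _ : ℕ => ν) = Q at hmp hind ⊢
  have hint : Integrable (fun z : ℕ → ℝ => z 0) Q := (hmp 0).integrable_comp_of_integrable hν
  have hpair : Pairwise (Function.onFun (fun X Y => IndepFun X Y Q)
      (fun (i : ℕ) (z : ℕ → ℝ) => z i)) := fun i j hij => hind.indepFun hij
  have hident (i : ℕ) : IdentDistrib (fun z : ℕ → ℝ => z i) (fun z : ℕ → ℝ => z 0) Q Q :=
    ⟨(hmp i).aemeasurable, (hmp 0).aemeasurable, (hmp i).map_eq.trans (hmp 0).map_eq.symm⟩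
  exact strong_law_ae_real (fun (i : ℕ) (z : ℕ → ℝ) => z i) hint hpair hident

theorem ou_theta_liminf_infinite_sample_consistent
    (t x₀ μ σ : ℝ) (ht : 0 < t) (hσ : 0 < σ) (hx₀μ : x₀ ≠ μ)
    (P : ℝ → Measure (ℕ → ℝ))
    (hP : ∀ θ : ℝ, 0 < θ → IsCountableProductOf (P θ)
      (gaussianReal (x₀ * Real.exp (-θ * t) + μ * (1 - Real.exp (-θ * t)))
        ((σ ^ 2 / (2 * θ) * (1 - Real.exp (-2 * θ * t))).toNNReal))) :
    ∀ θ : ℝ, 0 < θ →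
      P θ {z : ℕ → ℝ |
        Filter.liminf (fun n : ℕ =>
            -(1 / t) * Real.log (((∑ k ∈ Finset.range n, z k) / n - μ) / (x₀ - μ)))
          atTop = θ} = 1 := by
  intro θ hθ
  have hprob := (hP θ hθ).1
  have hslln := ae_tendsto_mean_infinitePi
    (gaussianReal (x₀ * Real.exp (-θ * t) + μ * (1 - Real.exp (-θ * t)))
        ((σ ^ 2 / (2 * θ) * (1 - Real.exp (-2 * θ * t))).toNNReal))
    ((memLp_id_gaussianReal 1).integrable le_rfl)
  rw [← (hP θ hθ).eq_infinitePi, integral_id_gaussianReal] at hslln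
  rw [measure_congr (t := Set.univ) ?_, measure_univ]
  rw [eventuallyEq_univ]
  filter_upwards [hslln] with z hz
  have hne : x₀ - μ ≠ 0 := sub_ne_zero.mpr hx₀μ
  have hlim : (x₀ * Real.exp (-θ * t) + μ * (1 - Real.exp (-θ * t)) - μ) / (x₀ - μ)
      = Real.exp (-θ * t) := by
    field_simp
    ring
  have hratio := (hz.sub_const μ).div_const (x₀ - μ)
  rw [hlim] at hratio
  have hT := (hratio.log (Real.exp_ne_zero _)).const_mul (-(1 / t))
  have hval : -(1 / t) * Real.log (Real.exp (-θ * t)) = θ := by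
    rw [Real.log_exp]
    field_simp
  rw [hval] at hT
  exact hT.liminf_eq
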